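/- arXiv:1710.09431 — 5 statements merged into one kernel-verified Lean document; each statement's English description precedes it below -/
import Mathlib

section
/- Let N, R be positive integers, let v^(1),...,v^(N) be pairwise distinct vectors in (ℕ ∪ {0})^R, and let Ω be a positive integer. Define, for i,j ∈ [N], the nonnegative integer e_{ij} = ∑_{r=1}^R Ω^r · v^(i)_r · v^(j)_r. Then for all values of z ∈ ℝ except a finite set, the N×N matrix with entries (z^{e_{ij}})_{i,j} is nonsingular. -/
/-!
The determinant is the value at `z` of the polynomial `det (X ^ e i j)`, in whose Leibniz expansion
the permutation `σ` contributes `± X ^ ∑ i, e (σ i) i`. The exponents satisfy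
`e i i + e j j - 2 * e i j = ∑ r, Ω ^ (r + 1) * (v i r - v j r) ^ 2 > 0` for `i ≠ j`, and summing
this over the pairs `(σ i, i)` shows that the identity alone attains the largest degree, so nothing
cancels its monomial.
-/

section Inequalities

variable {ι M : Type*} [Fintype ι]

lemma sum_perm_apply_lt_sum_diag [AddCommMonoid M] [LinearOrder M]
    [IsOrderedCancelAddMonoid M] {e : ι → ι → M}
    (he : Pairwise fun i j => 2 • e i j < e i i + e j j) {σ : Equiv.Perm ι} (hσ : σ ≠ 1) :
    ∑ i, e (σ i) i < ∑ i, e i i := by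
  obtain ⟨k, hk⟩ : ∃ k, σ k ≠ k := not_forall.mp fun h => hσ (Equiv.ext h)
  have le_diag (i : ι) : 2 • e (σ i) i ≤ e (σ i) (σ i) + e i i := by
    rcases eq_or_ne (σ i) i with hi | hi
    · rw [hi, two_nsmul]
    · exact (he hi).le
  refine lt_of_nsmul_lt_nsmul_right 2 ?_
  calc 2 • ∑ i, e (σ i) i = ∑ i, 2 • e (σ i) i := Finset.smul_sum
    _ < ∑ i, (e (σ i) (σ i) + e i i) :=
      Finset.sum_lt_sum (fun i _ => le_diag i) ⟨k, Finset.mem_univ k, he hk⟩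
    _ = 2 • ∑ i, e i i := by
      rw [Finset.sum_add_distrib, Equiv.sum_comp σ fun i => e i i, two_nsmul]

lemma two_mul_lt_add_sq_of_ne [CommSemiring M] [LinearOrder M] [IsStrictOrderedRing M]
    [ExistsAddOfLE M] {a b : M} (hab : a ≠ b) : 2 * a * b < a ^ 2 + b ^ 2 := by
  wlog hlt : a < b generalizing a b
  · simpa only [mul_right_comm, add_comm] using this hab.symm (hab.symm.lt_of_le (not_lt.mp hlt))
  calc 2 * a * b = a * b + b * a := by ring
    _ < a * a + b * b := mul_add_mul_lt_mul_add_mul hlt hlt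
    _ = a ^ 2 + b ^ 2 := by rw [sq, sq]

lemma two_mul_sum_mul_mul_lt_of_ne [CommSemiring M] [LinearOrder M] [IsStrictOrderedRing M]
    [ExistsAddOfLE M] {w x y : ι → M} (hw : ∀ r, 0 < w r) (hxy : x ≠ y) :
    2 * ∑ r, w r * x r * y r < ∑ r, w r * x r * x r + ∑ r, w r * y r * y r := by
  obtain ⟨s, hs⟩ := Function.ne_iff.mp hxy
  calc 2 * ∑ r, w r * x r * y r = ∑ r, w r * (2 * x r * y r) := by
        rw [Finset.mul_sum]
        exact Finset.sum_congr rfl fun r _ => by ring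
    _ < ∑ r, w r * (x r ^ 2 + y r ^ 2) :=
      Finset.sum_lt_sum
        (fun r _ => mul_le_mul_of_nonneg_left (two_mul_le_add_sq (x r) (y r)) (hw r).le)
        ⟨s, Finset.mem_univ s, mul_lt_mul_of_pos_left (two_mul_lt_add_sq_of_ne hs) (hw s)⟩
    _ = ∑ r, w r * x r * x r + ∑ r, w r * y r * y r := by
      rw [← Finset.sum_add_distrib]
      exact Finset.sum_congr rfl fun r _ => by ring

end Inequalities

section Det

open Polynomial

variable {ι R : Type*} [Fintype ι] [DecidableEq ι] [CommRing R]

lemma coeff_det_X_pow_sum_diag {e : ι → ι → ℕ}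
    (he : ∀ σ : Equiv.Perm ι, σ ≠ 1 → ∑ i, e (σ i) i ≠ ∑ i, e i i) :
    (Matrix.of fun i j => (X : R[X]) ^ e i j).det.coeff (∑ i, e i i) = 1 := by
  simp only [Matrix.det_apply, Matrix.of_apply, Finset.prod_pow_eq_pow_sum, finsetSum_coeff,
    coeff_smul, coeff_X_pow]
  rw [Finset.sum_eq_single_of_mem 1 (Finset.mem_univ 1)]
  · simp
  · intro σ _ hσ
    rw [if_neg (he σ hσ).symm, smul_zero]

lemma finite_setOf_det_map_eval_eq_zero [IsDomain R] {A : Matrix ι ι R[X]} (hA : A.det ≠ 0) :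
    {z : R | (A.map (eval z)).det = 0}.Finite := by
  have det_map_eval (z : R) : (A.map (eval z)).det = A.det.eval z :=
    ((evalRingHom z).map_det A).symm
  simpa only [det_map_eval, IsRoot.def] using finite_setOfPred_isRoot hA

theorem monomial_matrix_generically_nonsingular_general [IsDomain R] {e : ι → ι → ℕ}
    (he : Pairwise fun i j => 2 * e i j < e i i + e j j) :
    {z : R | (Matrix.of fun i j => z ^ e i j).det = 0}.Finite := by
  have hcoeff := coeff_det_X_pow_sum_diag (R := R) fun σ hσ => (sum_perm_apply_lt_sum_diag he hσ).ne
  have hdet : (Matrix.of fun i j => (X : R[X]) ^ e i j).det ≠ 0 := fun h => by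
    simp [h] at hcoeff
  have map_eval (z : R) : (Matrix.of fun i j => (X : R[X]) ^ e i j).map (eval z) =
      Matrix.of fun i j => z ^ e i j := by
    ext i j
    simp
  simpa only [map_eval] using finite_setOf_det_map_eval_eq_zero hdet

end Det

/-- Given pairwise distinct vectors `v^(1), …, v^(N)` of nonnegative integers
in `ℕ^R` and a positive integer `Ω`, set `e i j = ∑_{r=1}^R Ω^r ⬝ v^(i)_r ⬝ v^(j)_r`.
Then for all real `z` outside a finite set, the `N×N` matrix `(z^{e i j})_{i,j}` is
nonsingular. -/
theorem monomial_matrix_generically_nonsingular (N R : ℕ) (hN : 0 < N) (hR : 0 < R)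
    (v : Fin N → Fin R → ℕ) (hdist : Function.Injective v)
    (Ω : ℕ) (hΩ : 0 < Ω) :
    {z : ℝ | (Matrix.of fun i j : Fin N =>
        z ^ (∑ r : Fin R, Ω ^ ((r : ℕ) + 1) * v i r * v j r)).det = 0}.Finite := by
  exact monomial_matrix_generically_nonsingular_general fun i j hij =>
    two_mul_sum_mul_mul_lt_of_ne (fun r => pow_pos hΩ _) (hdist.ne hij)
end

section
/- Let R̄ and M be positive integers, let T be an even positive integer, and let Z ∈ ℝ^{R̄×M}. Define the order-T tensor A by A_{d_1,...,d_T} = ∏_{t=T/2+1}^{T} ∑_{r=1}^{R̄} ∏_{j=1}^{t} Z_{r d_j}, for indices d_1,...,d_T ∈ [M]. Then A_{d_1,...,d_T} = ∑_{p^{(T/2)} ∈ P_{R̄,T/2}} ∑_{(p^{(T/2−1)},...,p^{(1)}) ∈ T(p^{(T/2)})} ∏_{r=1}^{R̄} ( ∏_{j=1}^{T/2} Z_{r d_j}^{p^{(T/2)}_r} ) · ( ∏_{j=T/2+1}^{T} Z_{r d_j}^{p^{(T−j+1)}_r} ). -/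
/-- `stateSet R K` is the set `P_{R,K}` of `R`-tuples of nonnegative integers summing to `K`
(the possible states of a bucket with `K` balls of `R` colors). -/
def stateSet (R K : ℕ) : Finset (Fin R → ℕ) :=
  (Fintype.piFinset fun _ : Fin R => Finset.range (K + 1)).filter fun p => ∑ r, p r = K

/-- `pad q m` reads off the level-`m` state (1-indexed) of a chain `q : Fin K → Fin R → ℕ`,
returning the zero state out of range. -/
def pad {R K : ℕ} (q : Fin K → Fin R → ℕ) : ℕ → Fin R → ℕ :=
  fun m => if h : m - 1 < K then q ⟨m - 1, h⟩ else fun _ => 0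

/-- `chainSet R K p` encodes the trajectory set `T(p)` for a top state `p ∈ P_{R,K}`:
full chains `(p^{(1)}, …, p^{(K)})` with `p^{(k)} ∈ P_{R,k}`, entrywise monotone in `k`,
and whose top element `p^{(K)}` equals `p`; `q k` holds `p^{(k+1)}`. -/
def chainSet (R K : ℕ) (p : Fin R → ℕ) : Finset (Fin K → Fin R → ℕ) :=
  (Fintype.piFinset fun _ : Fin K => Fintype.piFinset fun _ : Fin R => Finset.range (K + 1)).filter
    fun q => (∀ k : Fin K, ∑ r, q k r = (k : ℕ) + 1) ∧
      (∀ k l : Fin K, (l : ℕ) = (k : ℕ) + 1 → ∀ r, q k r ≤ q l r) ∧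
      (∀ k : Fin K, (k : ℕ) = K - 1 → q k = p)

/-!
Expanding the product of sums gives a sum over colorings `g : Fin K → Fin R`, where `g k` is the
index `r` chosen in the factor `t = N + K - k` (in the theorem, `N = K = T / 2`). In the term of
`g`, the entry `x r j` is picked up once for each factor `t ≥ j` of color `r`, that is, for each
`k < N + K - j + 1` with `g k = r`. Hence its exponent is the number of balls of color `r` among
the first `N + K - j + 1`, which for `j ≤ N` is the number among all `K`.

Adding the balls one at a time turns a coloring into a trajectory. Every trajectory arises from
exactly one coloring, because consecutive states differ by a single ball, whose color is `g k`.
-/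

section Coloring

open Finset

variable {α : Type*} [DecidableEq α] {K : ℕ}

/-- The number of balls of color `r` among the first `m` of `K` balls colored by `g`; as a function
of `r`, the state of a bucket into which these `m` balls have been put. -/
def colorCount (g : Fin K → α) (m : ℕ) (r : α) : ℕ :=
  #{k : Fin K | (k : ℕ) < m ∧ g k = r}

lemma colorCount_zero (g : Fin K → α) : colorCount g 0 = 0 := by
  ext r
  simp [colorCount]

lemma colorCount_succ (g : Fin K → α) (k : Fin K) :
    colorCount g (k + 1) = colorCount g k + Pi.single (g k) 1 := by
  have insert_last : ({i : Fin K | (i : ℕ) < k + 1} : Finset (Fin K)) =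
      insert k ({i : Fin K | (i : ℕ) < k} : Finset (Fin K)) := by
    ext i
    simp only [mem_filter, mem_univ, true_and, mem_insert, Fin.ext_iff]
    lia
  ext r
  simp only [colorCount, ← filter_filter, insert_last, filter_insert, Pi.add_apply,
    Pi.single_apply, eq_comm (a := r)]
  split_ifs <;> simp

lemma colorCount_mono (g : Fin K → α) : Monotone (colorCount g) :=
  fun _ _ hmn _ => card_le_card <| monotone_filter_right _ fun _ _ h => ⟨h.1.trans_le hmn, h.2⟩

lemma colorCount_of_le (g : Fin K → α) {m : ℕ} (hm : K ≤ m) : colorCount g m = colorCount g K := by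
  ext r
  simp only [colorCount, Fin.is_lt, (Fin.is_lt _).trans_le hm]

lemma sum_colorCount [Fintype α] (g : Fin K → α) (m : ℕ) :
    ∑ r, colorCount g m r = min K m := by
  simp only [colorCount, ← filter_filter]
  rw [← card_eq_sum_card_fiberwise fun _ _ => mem_univ _, Fin.card_filter_val_lt]

lemma prod_pow_colorCount [Fintype α] {S : Type*} [CommMonoid S] (g : Fin K → α) (m : ℕ)
    (x : α → S) : ∏ r, x r ^ colorCount g m r = ∏ k with Fin.val k < m, x (g k) := by
  rw [← prod_fiberwise']
  simp only [prod_const, colorCount, filter_filter]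

lemma exists_eq_add_single [Fintype α] {a b : α → ℕ} (hab : a ≤ b)
    (hsum : ∑ r, b r = ∑ r, a r + 1) : ∃ s, b = a + Pi.single s 1 := by
  obtain ⟨s, -, hs⟩ : ∃ s ∈ univ, a s < b s := exists_lt_of_sum_lt (by lia)
  have single_le : a + Pi.single s 1 ≤ b := by
    intro r
    obtain rfl | hr := eq_or_ne r s
    · simpa using hs
    · simpa [hr] using hab r
  have sum_eq : ∑ r, (a + Pi.single s 1 : α → ℕ) r = ∑ r, b r := by
    simp [sum_add_distrib, hsum]
  refine ⟨s, funext fun r => ?_⟩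
  exact ((sum_eq_sum_iff_of_le fun r _ => single_le r).1 sum_eq r (mem_univ r)).symm

lemma exists_colorCount_eq [Fintype α] {P : Fin (K + 1) → α → ℕ} (hP : Monotone P)
    (hsum : ∀ m : Fin (K + 1), ∑ r, P m r = m) :
    ∃ g : Fin K → α, ∀ m : Fin (K + 1), colorCount g m = P m := by
  have added_ball (k : Fin K) : ∃ s, P k.succ = P k.castSucc + Pi.single s 1 :=
    exists_eq_add_single (Fin.monotone_iff_le_succ.1 hP k) (by simp [hsum])
  choose g hg using added_ball
  refine ⟨g, Fin.induction ?_ fun k ih => ?_⟩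
  · have hP0 : P 0 = 0 := funext fun r => by simpa using sum_eq_zero_iff.1 (hsum 0) r
    rw [hP0, Fin.val_zero, colorCount_zero]
  · rw [Fin.val_succ, colorCount_succ, hg, ← ih, Fin.val_castSucc]

/-- The states `p^{(1)}, …, p^{(K)}` of a bucket that is filled with balls colored by `g`; as in
`chainSet`, the value at `k` is `p^{(k+1)}`. -/
def trajectory (g : Fin K → α) (k : Fin K) : α → ℕ :=
  colorCount g (k + 1)

lemma trajectory_injective :
    Function.Injective (trajectory : (Fin K → α) → Fin K → α → ℕ) := by
  intro g g' h
  have colorCount_eq (m : ℕ) (hm : m ≤ K) : colorCount g m = colorCount g' m := by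
    cases m with
    | zero => rw [colorCount_zero, colorCount_zero]
    | succ m => exact congrFun h ⟨m, hm⟩
  ext1 k
  have single_eq : (Pi.single (g k) 1 : α → ℕ) = Pi.single (g' k) 1 := by
    have hk := colorCount_eq (k + 1) k.2
    rwa [colorCount_succ, colorCount_succ, colorCount_eq k k.2.le, add_right_inj] at hk
  simpa [Pi.single_apply] using congrFun single_eq (g k)

end Coloring

section Trajectory

open Finset

variable {R K : ℕ}

lemma pad_trajectory (g : Fin K → Fin R) {m : ℕ} (hm : m < K) :
    pad (trajectory g) (m + 1) = colorCount g (m + 1) := by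
  simp [pad, trajectory, hm]

lemma mem_stateSet {p : Fin R → ℕ} : p ∈ stateSet R K ↔ ∑ r, p r = K := by
  simp only [stateSet, mem_filter, Fintype.mem_piFinset, mem_range, Nat.lt_succ_iff,
    and_iff_right_iff_imp]
  rintro rfl r
  exact single_le_sum_of_canonicallyOrdered (mem_univ r)

lemma mem_chainSet {p : Fin R → ℕ} {q : Fin K → Fin R → ℕ} :
    q ∈ chainSet R K p ↔
      (∀ k, ∑ r, q k r = k + 1) ∧ Monotone q ∧ ∀ k : Fin K, (k : ℕ) = K - 1 → q k = p := by
  have entry_lt (hsum : ∀ k, ∑ r, q k r = k + 1) (k : Fin K) (r : Fin R) : q k r < K + 1 := by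
    have := single_le_sum_of_canonicallyOrdered (f := q k) (mem_univ r)
    have := hsum k
    lia
  have monotone_iff :
      Monotone q ↔ ∀ k l : Fin K, (l : ℕ) = k + 1 → ∀ r, q k r ≤ q l r := by
    refine ⟨fun h k l hkl => h (Fin.le_def.2 (by lia)), fun h => ?_⟩
    cases K with
    | zero => exact fun k => k.elim0
    | succ K => exact Fin.monotone_iff_le_succ.2 fun k => h _ _ (by simp)
  simp only [chainSet, mem_filter, Fintype.mem_piFinset, mem_range, monotone_iff,
    and_iff_right_iff_imp]
  exact fun h => entry_lt h.1

lemma colorCount_mem_stateSet (g : Fin K → Fin R) : colorCount g K ∈ stateSet R K :=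
  mem_stateSet.2 <| by rw [sum_colorCount, min_self]

lemma trajectory_mem_chainSet (g : Fin K → Fin R) :
    trajectory g ∈ chainSet R K (colorCount g K) := by
  refine mem_chainSet.2 ⟨fun k => ?_, fun k l hkl => ?_, fun k hk => ?_⟩
  · rw [trajectory, sum_colorCount, min_eq_right k.2]
  · exact colorCount_mono g (Nat.succ_le_succ hkl)
  · rw [trajectory, show (k : ℕ) + 1 = K by lia]

lemma exists_trajectory_eq {p : Fin R → ℕ} {q : Fin K → Fin R → ℕ} (hp : p ∈ stateSet R K)
    (hq : q ∈ chainSet R K p) : ∃ g : Fin K → Fin R, colorCount g K = p ∧ trajectory g = q := by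
  rw [mem_stateSet] at hp
  obtain ⟨hsum, hmono, htop⟩ := mem_chainSet.1 hq
  cases K with
  | zero =>
    have hp0 : p = 0 := funext fun r => by simpa using sum_eq_zero_iff.1 hp r
    exact ⟨Fin.elim0, by rw [colorCount_zero, hp0], Subsingleton.elim _ _⟩
  | succ K =>
    obtain ⟨g, hg⟩ := exists_colorCount_eq (P := Matrix.vecCons 0 q)
      (monotone_vecCons.2 ⟨zero_le, hmono⟩) (Fin.cases (by simp) (by simp [hsum]))
    have trajectory_eq : trajectory g = q := funext fun k => hg k.succ
    exact ⟨g, (congrFun trajectory_eq (Fin.last K)).trans (htop _ rfl), trajectory_eq⟩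

lemma sum_stateSet_chainSet {S : Type*} [AddCommMonoid S]
    (f : (Fin R → ℕ) → (Fin K → Fin R → ℕ) → S) :
    ∑ p ∈ stateSet R K, ∑ q ∈ chainSet R K p, f p q =
      ∑ g : Fin K → Fin R, f (colorCount g K) (trajectory g) := by
  rw [sum_sigma']
  symm
  refine sum_bij (fun g _ => ⟨colorCount g K, trajectory g⟩) (fun g _ => ?_) (fun g _ g' _ h => ?_)
    (fun ⟨p, q⟩ hpq => ?_) fun _ _ => rfl
  · exact mem_sigma.2 ⟨colorCount_mem_stateSet g, trajectory_mem_chainSet g⟩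
  · exact trajectory_injective (eq_of_heq (Sigma.mk.inj h).2)
  · obtain ⟨hp, hq⟩ := mem_sigma.1 hpq
    obtain ⟨g, rfl, rfl⟩ := exists_trajectory_eq hp hq
    exact ⟨g, mem_univ g, rfl⟩

end Trajectory

section Expansion

open Finset

lemma prod_Icc_eq_prod_fin_sub {S : Type*} [CommMonoid S] (f : ℕ → S) (N K : ℕ) :
    ∏ t ∈ Icc (N + 1) (N + K), f t = ∏ k : Fin K, f (N + K - k) := by
  rw [← prod_range fun k => f (N + K - k), range_eq_Ico, prod_Ico_reflect f 0 (by lia)]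
  congr 1
  ext t
  simp only [mem_Icc, mem_Ico]
  lia

variable {α S : Type*} [Fintype α] [DecidableEq α] [CommMonoid S] {K : ℕ}

lemma prod_Icc_coloring (N : ℕ) (x : α → ℕ → S) (g : Fin K → α) :
    ∏ k : Fin K, ∏ j ∈ Icc 1 (N + K - k), x (g k) j =
      ∏ r, ∏ j ∈ Icc 1 (N + K), x r j ^ colorCount g (N + K - j + 1) r := by
  calc ∏ k : Fin K, ∏ j ∈ Icc 1 (N + K - k), x (g k) j
    _ = ∏ j ∈ Icc 1 (N + K), ∏ k with Fin.val k < N + K - j + 1, x (g k) j :=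
      prod_comm' fun k j => by
        simp only [mem_univ, mem_Icc, mem_filter, true_and]
        lia
    _ = ∏ j ∈ Icc 1 (N + K), ∏ r, x r j ^ colorCount g (N + K - j + 1) r :=
      prod_congr rfl fun j _ => (prod_pow_colorCount g _ (x · j)).symm
    _ = ∏ r, ∏ j ∈ Icc 1 (N + K), x r j ^ colorCount g (N + K - j + 1) r := prod_comm

lemma prod_Icc_coloring_eq_trajectory {R : ℕ} (N : ℕ) (x : Fin R → ℕ → S) (g : Fin K → Fin R) :
    ∏ k : Fin K, ∏ j ∈ Icc 1 (N + K - k), x (g k) j =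
      ∏ r, (∏ j ∈ Icc 1 N, x r j ^ colorCount g K r) *
        ∏ j ∈ Icc (N + 1) (N + K), x r j ^ pad (trajectory g) (N + K - j + 1) r := by
  rw [prod_Icc_coloring]
  refine prod_congr rfl fun r _ => ?_
  have Icc_one (n : ℕ) : Icc 1 n = Ioc 0 n := Icc_add_one_left_eq_Ioc 0 n
  rw [Icc_one, Icc_one, Icc_add_one_left_eq_Ioc,
    ← prod_Ioc_consecutive _ N.zero_le (Nat.le_add_right N K)]
  congr 1
  · refine prod_congr rfl fun j hj => ?_
    rw [mem_Ioc] at hj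
    rw [colorCount_of_le g (by lia)]
  · refine prod_congr rfl fun j hj => ?_
    rw [mem_Ioc] at hj
    rw [pad_trajectory g (by lia)]

end Expansion

theorem tensor_bucket_decomposition_general {S : Type*} [CommSemiring S] (R N K : ℕ)
    (x : Fin R → ℕ → S) :
    ∏ t ∈ Finset.Icc (N + 1) (N + K), ∑ r, ∏ j ∈ Finset.Icc 1 t, x r j =
      ∑ p ∈ stateSet R K, ∑ q ∈ chainSet R K p, ∏ r,
        (∏ j ∈ Finset.Icc 1 N, x r j ^ p r) *
          ∏ j ∈ Finset.Icc (N + 1) (N + K), x r j ^ pad q (N + K - j + 1) r := by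
  rw [prod_Icc_eq_prod_fin_sub, Fintype.prod_sum, sum_stateSet_chainSet]
  exact Finset.sum_congr rfl fun g _ => prod_Icc_coloring_eq_trajectory N x g

/-- For `Z ∈ ℝ^{R̄×M}` and the order-`T` tensor
`A_{d_1,…,d_T} = ∏_{t=T/2+1}^{T} ∑_{r=1}^{R̄} ∏_{j=1}^{t} Z_{r d_j}`, the tensor decomposes
as a sum over bucket states `p ∈ P_{R̄,T/2}` and trajectories emptying the bucket. -/
theorem tensor_bucket_decomposition (Rb M T : ℕ) (hR : 0 < Rb) (hM : 0 < M)
    (hT : 0 < T) (hTeven : Even T)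
    (Z : Fin Rb → Fin M → ℝ) (d : ℕ → Fin M) :
    ∏ t ∈ Finset.Icc (T / 2 + 1) T, ∑ r : Fin Rb, ∏ j ∈ Finset.Icc 1 t, Z r (d j)
      = ∑ p ∈ stateSet Rb (T / 2), ∑ q ∈ chainSet Rb (T / 2) p,
          ∏ r : Fin Rb,
            (∏ j ∈ Finset.Icc 1 (T / 2), Z r (d j) ^ p r) *
            (∏ j ∈ Finset.Icc (T / 2 + 1) T, Z r (d j) ^ pad q (T - j + 1) r) := by
  obtain ⟨K, rfl⟩ := hTeven
  rw [show (K + K) / 2 = K by lia]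
  exact tensor_bucket_decomposition_general Rb K K fun r j => Z r (d j)
end

section
/- Let T be an even positive integer and R̄ a positive integer. For Ω ∈ ℝ, Ω > 0, for p^{(T/2)} ∈ P_{R̄,T/2} and d = (d_{T/2+1},...,d_T) ∈ [R̄]^{T/2} with d_j ≤ d_{j+1} for all j, define f(d, p^{(T/2)}) = max over trajectories (p^{(T/2−1)},...,p^{(1)}) ∈ T(p^{(T/2)}) of ∑_{j=T/2+1}^{T} Ω^{d_j} · p^{(T−j+1)}_{d_j}. Then there exists Ω > 0 such that for every such nondecreasing d, the maximum of f(d, p^{(T/2)}) over all p^{(T/2)} ∈ P_{R̄,T/2} is attained uniquely (strictly) at p̂^{(T/2)} defined by p̂^{(T/2)}_r = |{j ∈ {T/2+1,...,T} : d_j = r}| for each r ∈ [R̄]. -/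
/-- `f(d, p)`: the maximal accumulated reward `∑_{j=T/2+1}^{T} Ω^{d_j} ⬝ p^{(T-j+1)}_{d_j}`
over all trajectories in `T(p)` (chains in `chainSet` with top state `p`). -/
noncomputable def fval (Rb T : ℕ) (Ω : ℝ) (d : ℕ → Fin Rb) (p : Fin Rb → ℕ) : ℝ :=
  sSup ((fun q : Fin (T / 2) → Fin Rb → ℕ =>
      ∑ j ∈ Finset.Icc (T / 2 + 1) T,
        Ω ^ ((d j : ℕ) + 1) * (pad q (T - j + 1) (d j) : ℝ))
    '' ↑(chainSet Rb (T / 2) p))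

section Preliminaries

open Finset

lemma natCast_mul_pow_lt_pow {K : Type*} [Semiring K] [PartialOrder K] [IsStrictOrderedRing K]
    {x : K} (hx : 0 < x) {n : ℕ} (hn : (n : K) < x) {k l : ℕ} (hkl : k < l) :
    n * x ^ k < x ^ l := by
  rcases n.eq_zero_or_pos with rfl | hn_pos
  · simpa using pow_pos hx l
  · have hx_one : 1 ≤ x := (Nat.one_le_cast.2 hn_pos).trans hn.le
    calc n * x ^ k < x * x ^ k := mul_lt_mul_of_pos_right hn (pow_pos hx k)
      _ = x ^ (k + 1) := (pow_succ' x k).symm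
      _ ≤ x ^ l := pow_le_pow_right₀ hx_one hkl

lemma exists_eq_add_single_s7 {α : Type*} [Fintype α] [DecidableEq α] {u v : α → ℕ}
    (huv : u ≤ v) (hsum : ∑ a, v a = ∑ a, u a + 1) : ∃ a, v = u + Pi.single a 1 := by
  obtain ⟨a, -, ha⟩ : ∃ a ∈ univ, u a < v a := exists_lt_of_sum_lt (by omega)
  have hle : ∀ c ∈ univ, (u + Pi.single a 1 : α → ℕ) c ≤ v c := by
    intro c _
    rcases eq_or_ne c a with rfl | hca
    · simpa using ha
    · simpa [hca] using huv c
  have heq : ∑ c, (u + Pi.single a 1 : α → ℕ) c = ∑ c, v c := by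
    simp [sum_add_distrib, hsum]
  exact ⟨a, funext fun c => ((sum_eq_sum_iff_of_le hle).1 heq c (mem_univ c)).symm⟩

lemma sum_Icc_half_eq_sum_range {M : Type*} [AddCommMonoid M] {T : ℕ} (hT : Even T)
    (f : ℕ → M) :
    ∑ j ∈ Icc (T / 2 + 1) T, f j = ∑ m ∈ range (T / 2), f (T - m) := by
  have hhalf : T / 2 + 1 = T + 1 - T / 2 := by
    obtain ⟨k, rfl⟩ := hT
    omega
  rw [range_eq_Ico, sum_Ico_reflect f 0 (by omega), hhalf, Nat.sub_zero,
    Ico_add_one_right_eq_Icc]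

lemma antitoneOn_comp_sub_of_le_succ {α : Type*} [Preorder α] {T : ℕ} {d : ℕ → α}
    (hd : ∀ j, T / 2 + 1 ≤ j → j + 1 ≤ T → d j ≤ d (j + 1)) :
    AntitoneOn (fun m => d (T - m)) (Set.Iio (T / 2)) := by
  refine antitoneOn_of_add_one_le Set.ordConnected_Iio fun m _ _ hm => ?_
  have hm : m + 1 < T / 2 := hm
  have hstep := hd (T - (m + 1)) (by omega) (by omega)
  rwa [show T - (m + 1) + 1 = T - m by omega] at hstep

end Preliminaries

section Words

open Finset

variable {α M : Type*} [DecidableEq α]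

/-- The state reached after the first `m` letters of the word `b`: the number of occurrences of
each letter. Words are infinite sequences of which only an initial segment matters. -/
def letterCount (b : ℕ → α) (m : ℕ) (a : α) : ℕ :=
  Nat.count (fun i => b i = a) m

lemma letterCount_zero (b : ℕ → α) : letterCount b 0 = 0 := by
  funext a
  exact Nat.count_zero _

lemma letterCount_succ (b : ℕ → α) (m : ℕ) :
    letterCount b (m + 1) = letterCount b m + Pi.single (b m) 1 := by
  funext a
  simp only [letterCount, Nat.count_succ, Pi.add_apply, Pi.single_apply, eq_comm]

lemma letterCount_eq_sum (b : ℕ → α) (m : ℕ) (a : α) :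
    letterCount b m a = ∑ i ∈ range m, if b i = a then 1 else 0 := by
  rw [letterCount, Nat.count_eq_card_filter_range, card_filter]

lemma letterCount_le (b : ℕ → α) (m : ℕ) (a : α) : letterCount b m a ≤ m :=
  Nat.count_le _

lemma letterCount_congr {b c : ℕ → α} {m : ℕ} (h : ∀ i < m, b i = c i) :
    letterCount b m = letterCount c m := by
  funext a
  simp only [letterCount_eq_sum]
  exact sum_congr rfl fun i hi => by rw [h i (mem_range.1 hi)]

lemma sum_letterCount [Fintype α] (b : ℕ → α) (m : ℕ) : ∑ a, letterCount b m a = m := by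
  simp only [letterCount_eq_sum]
  rw [sum_comm]
  simp

lemma exists_eq_letterCount_of_chain [Fintype α] [Nonempty α] {N : ℕ} {Q : ℕ → α → ℕ}
    (hsum : ∀ k ≤ N, ∑ a, Q k a = k) (hmono : ∀ k < N, Q k ≤ Q (k + 1)) :
    ∃ b : ℕ → α, ∀ k ≤ N, Q k = letterCount b k := by
  have hstep : ∀ k, ∃ a, k < N → Q (k + 1) = Q k + Pi.single a 1 := by
    intro k
    by_cases hk : k < N
    · obtain ⟨a, ha⟩ := exists_eq_add_single_s7 (hmono k hk) (by rw [hsum k hk.le, hsum (k + 1) hk])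
      exact ⟨a, fun _ => ha⟩
    · exact ⟨Classical.arbitrary α, fun h => absurd h hk⟩
  choose b hb using hstep
  refine ⟨b, fun k => ?_⟩
  induction k with
  | zero =>
    intro hk
    have h0 := hsum 0 hk
    funext a
    exact sum_eq_zero_iff.1 h0 a (mem_univ a)
  | succ k ih =>
    intro hk
    rw [hb k hk, letterCount_succ, ih (by omega)]

lemma exists_letterCount_eq [Fintype α] [Nonempty α] {N : ℕ} {p : α → ℕ}
    (hp : ∑ a, p a = N) : ∃ b : ℕ → α, letterCount b N = p := by
  induction N generalizing p with
  | zero =>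
    refine ⟨fun _ => Classical.arbitrary α, funext fun a => ?_⟩
    rw [letterCount_zero, Pi.zero_apply, sum_eq_zero_iff.1 hp a (mem_univ a)]
  | succ N ih =>
    obtain ⟨a, -, ha⟩ : ∃ a ∈ univ, p a ≠ 0 := exists_ne_zero_of_sum_ne_zero (by omega)
    obtain ⟨u, rfl⟩ : ∃ u : α → ℕ, p = u + Pi.single a 1 :=
      ⟨p - Pi.single a 1, (tsub_add_cancel_of_le
        (update_le_iff.2 ⟨Nat.one_le_iff_ne_zero.2 ha, fun _ _ => Nat.zero_le _⟩)).symm⟩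
    obtain ⟨b, hb⟩ := ih (p := u) (by simpa [sum_add_distrib] using hp)
    refine ⟨Function.update b N a, ?_⟩
    rw [letterCount_succ, Function.update_self, ← hb]
    congr 1
    exact letterCount_congr fun i hi => Function.update_of_ne hi.ne _ _

variable [AddCommMonoid M]

/-- The reward of the word `b` of length `N`: at time `m` one collects `w (e m)` for every
occurrence of the letter `e m` among `b 0, …, b m`. -/
def wordReward (w : α → M) (e : ℕ → α) (N : ℕ) (b : ℕ → α) : M :=
  ∑ m ∈ range N, letterCount b (m + 1) (e m) • w (e m)

/-- The total amount that a letter `a` placed at position `i` contributes to `wordReward`. -/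
def letterGain (w : α → M) (e : ℕ → α) (N i : ℕ) (a : α) : M :=
  #{m ∈ Ico i N | e m = a} • w a

lemma wordReward_eq_sum_letterGain (w : α → M) (e : ℕ → α) (N : ℕ) (b : ℕ → α) :
    wordReward w e N b = ∑ i ∈ range N, letterGain w e N i (b i) := by
  calc wordReward w e N b
      = ∑ m ∈ range N, ∑ i ∈ range (m + 1), if e m = b i then w (b i) else 0 := by
        refine sum_congr rfl fun m _ => ?_
        rw [letterCount_eq_sum, sum_smul]
        refine sum_congr rfl fun i _ => ?_
        by_cases h : e m = b i <;> simp [h, eq_comm]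
    _ = ∑ i ∈ range N, ∑ m ∈ Ico i N, if e m = b i then w (b i) else 0 :=
        sum_comm' fun m i => by simp only [mem_range, mem_Ico]; omega
    _ = ∑ i ∈ range N, letterGain w e N i (b i) :=
        sum_congr rfl fun i _ => by rw [← sum_filter, sum_const, letterGain]

variable [PartialOrder α] [PartialOrder M] {w : α → M} {e : ℕ → α} {N : ℕ}

lemma letterGain_lt [IsOrderedAddMonoid M] (hw_pos : ∀ a, 0 < w a)
    (hw : ∀ a c, a < c → ∀ n < N, n • w a < w c)
    (he : AntitoneOn e (Set.Iio N)) {i : ℕ} (hi : i < N) {a : α} (ha : a ≠ e i) :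
    letterGain w e N i a < letterGain w e N i (e i) := by
  have hself : w (e i) ≤ letterGain w e N i (e i) := by
    have hcard : 1 ≤ #{m ∈ Ico i N | e m = e i} :=
      card_pos.2 ⟨i, mem_filter.2 ⟨left_mem_Ico.2 hi, rfl⟩⟩
    simpa only [letterGain, one_nsmul] using nsmul_le_nsmul_left (hw_pos (e i)).le hcard
  refine lt_of_lt_of_le ?_ hself
  rw [letterGain]
  rcases eq_empty_or_nonempty {m ∈ Ico i N | e m = a} with hempty | ⟨m, hm⟩
  · simpa only [hempty, card_empty, zero_nsmul] using hw_pos (e i)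
  · obtain ⟨hm_Ico, rfl⟩ := mem_filter.1 hm
    obtain ⟨him, hmN⟩ := mem_Ico.1 hm_Ico
    refine hw _ _ ((he hi hmN him).lt_of_ne ha) _ ?_
    calc #{k ∈ Ico i N | e k = e m}
        < #(Ico i N) := card_lt_card (filter_ssubset.2 ⟨i, left_mem_Ico.2 hi, ha.symm⟩)
      _ ≤ N := by rw [Nat.card_Ico]; exact Nat.sub_le N i

lemma wordReward_lt [IsOrderedCancelAddMonoid M] (hw_pos : ∀ a, 0 < w a)
    (hw : ∀ a c, a < c → ∀ n < N, n • w a < w c)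
    (he : AntitoneOn e (Set.Iio N)) {b : ℕ → α} (hb : ∃ i < N, b i ≠ e i) :
    wordReward w e N b < wordReward w e N e := by
  simp only [wordReward_eq_sum_letterGain]
  obtain ⟨i, hi, hne⟩ := hb
  refine sum_lt_sum (fun k hk => ?_)
    ⟨i, mem_range.2 hi, letterGain_lt hw_pos hw he hi hne⟩
  rcases eq_or_ne (b k) (e k) with h | h
  · rw [h]
  · exact (letterGain_lt hw_pos hw he (mem_range.1 hk) h).le

end Words

section Trajectories

open Finset

variable {R N T : ℕ} {p : Fin R → ℕ}

lemma sum_eq_of_mem_stateSet (hp : p ∈ stateSet R N) : ∑ r, p r = N :=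
  (mem_filter.1 hp).2

lemma letterCount_mem_stateSet (b : ℕ → Fin R) (N : ℕ) : letterCount b N ∈ stateSet R N := by
  simp only [stateSet, mem_filter, Fintype.mem_piFinset, mem_range, Nat.lt_succ_iff]
  exact ⟨letterCount_le b N, sum_letterCount b N⟩

lemma pad_succ (q : Fin N → Fin R → ℕ) {k : ℕ} (hk : k < N) : pad q (k + 1) = q ⟨k, hk⟩ :=
  dif_pos hk

lemma letterCount_mem_chainSet (b : ℕ → Fin R) (N : ℕ) :
    (fun k : Fin N => letterCount b (k + 1)) ∈ chainSet R N (letterCount b N) := by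
  simp only [chainSet, mem_filter, Fintype.mem_piFinset, mem_range, Nat.lt_succ_iff]
  refine ⟨fun k r => ?_, fun k => sum_letterCount b _, fun k l hkl r => ?_, fun k hk => ?_⟩
  · exact (letterCount_le b (k + 1) r).trans k.2
  · exact Nat.count_monotone _ (by omega)
  · rw [hk, Nat.sub_add_cancel (by have := k.2; omega)]

lemma exists_word_of_mem_chainSet [NeZero R] (hp : p ∈ stateSet R N)
    {q : Fin N → Fin R → ℕ} (hq : q ∈ chainSet R N p) :
    ∃ b : ℕ → Fin R, letterCount b N = p ∧ ∀ k : Fin N, q k = letterCount b (k + 1) := by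
  obtain ⟨-, hsum, hmono, htop⟩ := mem_filter.1 hq
  let Q : ℕ → Fin R → ℕ := fun k => k.casesOn 0 fun k => pad q (k + 1)
  have hQ : ∀ k (hk : k < N), Q (k + 1) = q ⟨k, hk⟩ := fun k hk => pad_succ q hk
  obtain ⟨b, hb⟩ : ∃ b, ∀ k ≤ N, Q k = letterCount b k := by
    refine exists_eq_letterCount_of_chain (fun k hk => ?_) (fun k hk => ?_)
    · cases k with
      | zero => exact sum_const_zero
      | succ k => rw [hQ k hk, hsum]
    · cases k with
      | zero => exact fun r => Nat.zero_le _
      | succ k =>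
        rw [hQ k (by omega), hQ (k + 1) hk]
        exact hmono _ _ rfl
  refine ⟨b, ?_, fun k => by rw [← hb (k + 1) k.2, hQ k k.2]⟩
  rw [← hb N le_rfl]
  cases N with
  | zero =>
    funext r
    exact (sum_eq_zero_iff.1 (sum_eq_of_mem_stateSet hp) r (mem_univ r)).symm
  | succ N => rw [hQ N N.lt_succ_self, htop _ rfl]

lemma card_filter_Icc_half_eq_letterCount (hT : Even T) (d : ℕ → Fin R) :
    (fun r => #{j ∈ Icc (T / 2 + 1) T | d j = r}) = letterCount (fun m => d (T - m)) (T / 2) := by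
  funext r
  rw [card_filter, sum_Icc_half_eq_sum_range hT, letterCount_eq_sum]

/-- The reward `Ω ^ c` for a ball of color `c`; the colors `1, …, R` are encoded as
`0, …, R - 1`, hence the shift. -/
def ballReward (Ω : ℝ) (r : Fin R) : ℝ :=
  Ω ^ ((r : ℕ) + 1)

lemma nsmul_ballReward_lt {Ω : ℝ} (hΩ_pos : 0 < Ω) (hΩ : (T : ℝ) / 2 < Ω + 1) (a c : Fin R)
    (hac : a < c) (n : ℕ) (hn : n < T / 2) : n • ballReward Ω a < ballReward Ω c := by
  have hnT : (n : ℝ) + 1 ≤ T / 2 :=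
    (by exact_mod_cast hn : (n : ℝ) + 1 ≤ (T / 2 : ℕ)).trans Nat.cast_div_le
  rw [nsmul_eq_mul]
  exact natCast_mul_pow_lt_pow hΩ_pos (by linarith) (Nat.succ_lt_succ hac)

/-- The objective of the maximization defining `fval`. -/
noncomputable def chainReward (T : ℕ) (Ω : ℝ) (d : ℕ → Fin R) (q : Fin (T / 2) → Fin R → ℕ) : ℝ :=
  ∑ j ∈ Icc (T / 2 + 1) T, Ω ^ ((d j : ℕ) + 1) * (pad q (T - j + 1) (d j) : ℝ)

lemma chainReward_eq_wordReward (hT : Even T) (Ω : ℝ) (d : ℕ → Fin R)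
    {q : Fin (T / 2) → Fin R → ℕ} {b : ℕ → Fin R} (hq : ∀ k, q k = letterCount b (k + 1)) :
    chainReward T Ω d q = wordReward (ballReward Ω) (fun m => d (T - m)) (T / 2) b := by
  rw [chainReward, sum_Icc_half_eq_sum_range hT, wordReward]
  refine sum_congr rfl fun m hm => ?_
  have hm := mem_range.1 hm
  rw [Nat.sub_sub_self (by omega), pad_succ q hm, hq, nsmul_eq_mul, mul_comm, ballReward]

lemma image_chainReward_chainSet [NeZero R] (hT : Even T) (Ω : ℝ) (d : ℕ → Fin R)
    (hp : p ∈ stateSet R (T / 2)) :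
    chainReward T Ω d '' chainSet R (T / 2) p =
      wordReward (ballReward Ω) (fun m => d (T - m)) (T / 2) ''
        {b | letterCount b (T / 2) = p} := by
  refine Set.Subset.antisymm ?_ ?_
  · rintro _ ⟨q, hq, rfl⟩
    obtain ⟨b, hbp, hb⟩ := exists_word_of_mem_chainSet hp hq
    exact ⟨b, hbp, (chainReward_eq_wordReward hT Ω d hb).symm⟩
  · rintro _ ⟨b, rfl, rfl⟩
    exact ⟨_, letterCount_mem_chainSet b _, chainReward_eq_wordReward hT Ω d fun _ => rfl⟩

lemma isGreatest_fval [NeZero R] (hT : Even T) (Ω : ℝ) (d : ℕ → Fin R)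
    (hp : p ∈ stateSet R (T / 2)) :
    IsGreatest (wordReward (ballReward Ω) (fun m => d (T - m)) (T / 2) ''
      {b | letterCount b (T / 2) = p}) (fval R T Ω d p) := by
  have hne : {b : ℕ → Fin R | letterCount b (T / 2) = p}.Nonempty :=
    exists_letterCount_eq (sum_eq_of_mem_stateSet hp)
  replace hne := hne.image (wordReward (ballReward Ω) (fun m => d (T - m)) (T / 2))
  rw [← image_chainReward_chainSet hT Ω d hp] at hne ⊢
  have hfin : (chainReward T Ω d '' chainSet R (T / 2) p).Finite := (finite_toSet _).image _
  exact ⟨hne.csSup_mem hfin, fun _ => le_csSup hfin.bddAbove⟩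

end Trajectories

-- For `T ≥ 4` the bound on `Ω` is sharp: if `Ω = T / 2 - 1` and `d` reads `1, …, 1, 2`, the state
-- with all balls of color `1` does equally well.
theorem optimal_bucket_state_unique_general {T Rb : ℕ} (hT : Even T) {Ω : ℝ} (hΩ_pos : 0 < Ω)
    (hΩ : (T : ℝ) / 2 < Ω + 1) {d : ℕ → Fin Rb}
    (hd : ∀ j : ℕ, T / 2 + 1 ≤ j → j + 1 ≤ T → d j ≤ d (j + 1)) :
    (fun r : Fin Rb => ((Finset.Icc (T / 2 + 1) T).filter fun j => d j = r).card)
        ∈ stateSet Rb (T / 2) ∧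
    ∀ p ∈ stateSet Rb (T / 2),
      p ≠ (fun r : Fin Rb => ((Finset.Icc (T / 2 + 1) T).filter fun j => d j = r).card) →
      fval Rb T Ω d p <
        fval Rb T Ω d
          (fun r : Fin Rb => ((Finset.Icc (T / 2 + 1) T).filter fun j => d j = r).card) := by
  have : NeZero Rb := ⟨(d 0).pos.ne'⟩
  rw [card_filter_Icc_half_eq_letterCount hT d]
  set e : ℕ → Fin Rb := fun m => d (T - m)
  have he_mem : letterCount e (T / 2) ∈ stateSet Rb (T / 2) := letterCount_mem_stateSet e _
  refine ⟨he_mem, fun p hp hne => ?_⟩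
  obtain ⟨⟨b, rfl, hb⟩, -⟩ := isGreatest_fval hT Ω d hp
  have hbe : ∃ i < T / 2, b i ≠ e i := by
    contrapose! hne
    exact letterCount_congr hne
  calc fval Rb T Ω d (letterCount b (T / 2)) = wordReward _ e (T / 2) b := hb.symm
    _ < wordReward _ e (T / 2) e :=
        wordReward_lt (fun _ => pow_pos hΩ_pos _) (nsmul_ballReward_lt hΩ_pos hΩ)
          (antitoneOn_comp_sub_of_le_succ hd) hbe
    _ ≤ fval Rb T Ω d (letterCount e (T / 2)) := (isGreatest_fval hT Ω d he_mem).2 ⟨e, rfl, rfl⟩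

/-- There exists `Ω > 0` such that for every nondecreasing color sequence
`d = (d_{T/2+1},…,d_T)`, the maximum of `f(d, ·)` over `P_{R̄,T/2}` is strictly and uniquely
attained at the state `p̂` counting the occurrences of each color in `d`. -/
theorem optimal_bucket_state_unique (T Rb : ℕ) (hT : 0 < T) (hTeven : Even T)
    (hRb : 0 < Rb) :
    ∃ Ω : ℝ, 0 < Ω ∧
      ∀ d : ℕ → Fin Rb,
        (∀ j : ℕ, T / 2 + 1 ≤ j → j + 1 ≤ T → d j ≤ d (j + 1)) →
        (fun r : Fin Rb => ((Finset.Icc (T / 2 + 1) T).filter fun j => d j = r).card)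
            ∈ stateSet Rb (T / 2) ∧
        ∀ p ∈ stateSet Rb (T / 2),
          p ≠ (fun r : Fin Rb => ((Finset.Icc (T / 2 + 1) T).filter fun j => d j = r).card) →
          fval Rb T Ω d p <
            fval Rb T Ω d
              (fun r : Fin Rb => ((Finset.Icc (T / 2 + 1) T).filter fun j => d j = r).card) := by
  have hΩ : (0 : ℝ) < T / 2 := by positivity
  exact ⟨T / 2, hΩ, fun d hd => optimal_bucket_state_unique_general hTeven hΩ (lt_add_one _) hd⟩
end

section
/- Consider a depth L=2 RAC with R hidden channels per layer, encoding f : X → ℝ^M, and the following weight assignment: W^{H,1} = W^{H,2} = I (identity matrices), W^{I,2} ∈ ℝ^{R×R} with entries W^{I,2}_{ij} = δ_{i1}, output matrix W^O ∈ ℝ^{C×R} with W^O_{ij} = δ_{1j}, arbitrary W^{I,1} ∈ ℝ^{R×M}, and initial hidden states h^{0,1} = h^{0,2} = 1 (all-ones vectors). Then for every class c ∈ [C] and every input (x^1,...,x^T) ∈ X^T, the output after T time-steps equals y^{T,2,Θ}_c(x^1,...,x^T) = ∏_{t=1}^T ∑_{r=1}^R ∏_{j=1}^t (W^{I,1} f(x^j))_r.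 -/
/-- Layer-1 hidden state of a depth-2 RAC (0-indexed inputs: the input at time-step `t+1`
is `x t`): `h^{0,1} = h01` and `h^{t+1,1} = (W^{H,1} h^{t,1}) ⊙ (W^{I,1} f(x^{t+1}))`. -/
noncomputable def hid1 {X : Type*} {M R : ℕ} (f : X → Fin M → ℝ)
    (WI1 : Fin R → Fin M → ℝ) (WH1 : Fin R → Fin R → ℝ) (h01 : Fin R → ℝ)
    (x : ℕ → X) : ℕ → Fin R → ℝ
  | 0 => h01
  | t + 1 => fun β =>
      (∑ α, WH1 β α * hid1 f WI1 WH1 h01 x t α) * (∑ m, WI1 β m * f (x t) m)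

/-- Layer-2 hidden state of a depth-2 RAC:
`h^{0,2} = h02` and `h^{t+1,2} = (W^{H,2} h^{t,2}) ⊙ (W^{I,2} h^{t+1,1})`. -/
noncomputable def hid2 {X : Type*} {M R : ℕ} (f : X → Fin M → ℝ)
    (WI1 : Fin R → Fin M → ℝ) (WH1 : Fin R → Fin R → ℝ) (h01 : Fin R → ℝ)
    (WI2 WH2 : Fin R → Fin R → ℝ) (h02 : Fin R → ℝ) (x : ℕ → X) : ℕ → Fin R → ℝ
  | 0 => h02
  | t + 1 => fun β =>
      (∑ α, WH2 β α * hid2 f WI1 WH1 h01 WI2 WH2 h02 x t α) *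
      (∑ α, WI2 β α * hid1 f WI1 WH1 h01 x (t + 1) α)

/-! An identity recurrent matrix decouples the channels: each hidden coordinate is its initial value
times the running product of its inputs. The first row of `W^{I,2}` feeds the sum of the layer-1
products into the first channel of layer 2, which `W^O` reads off. -/

theorem eq_mul_prod_range_of_succ_eq_mul {α : Type*} [CommMonoid α] {u a : ℕ → α}
    (hu : ∀ t, u (t + 1) = u t * a t) (t : ℕ) :
    u t = u 0 * ∏ s ∈ Finset.range t, a s := by
  induction t with
  | zero => simp
  | succ t ih => rw [hu, ih, Finset.prod_range_succ, mul_assoc]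

theorem sum_mul_of_eq_single_one {ι α : Type*} [Fintype ι] [DecidableEq ι]
    [NonAssocSemiring α] {w : ι → α} {i : ι} (hw : w = Pi.single i 1) (v : ι → α) :
    ∑ j, w j * v j = v i :=
  hw ▸ single_one_dotProduct i v

section HiddenStates

variable {X : Type*} {M R : ℕ} (f : X → Fin M → ℝ) (WI1 : Fin R → Fin M → ℝ)
  {WH1 : Fin R → Fin R → ℝ} (h01 : Fin R → ℝ) (WI2 : Fin R → Fin R → ℝ)
  {WH2 : Fin R → Fin R → ℝ} (h02 : Fin R → ℝ) (x : ℕ → X) (t : ℕ)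

theorem hid1_eq_mul_prod {r : Fin R} (hWH1 : WH1 r = Pi.single r 1) :
    hid1 f WI1 WH1 h01 x t r
      = h01 r * ∏ j ∈ Finset.range t, ∑ m, WI1 r m * f (x j) m :=
  eq_mul_prod_range_of_succ_eq_mul (u := fun t => hid1 f WI1 WH1 h01 x t r)
    (fun _ => by simp only [hid1, sum_mul_of_eq_single_one hWH1]) t

variable (WH1) in
theorem hid2_eq_mul_prod_sum_hid1 {r : Fin R} (hWH2 : WH2 r = Pi.single r 1) :
    hid2 f WI1 WH1 h01 WI2 WH2 h02 x t r
      = h02 r * ∏ s ∈ Finset.range t, ∑ α, WI2 r α * hid1 f WI1 WH1 h01 x (s + 1) α :=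
  eq_mul_prod_range_of_succ_eq_mul (u := fun t => hid2 f WI1 WH1 h01 WI2 WH2 h02 x t r)
    (fun _ => by simp only [hid2, sum_mul_of_eq_single_one hWH2]) t

theorem hid2_eq_mul_prod_sum_prod (hWH1 : ∀ α, WH1 α = Pi.single α 1) {r : Fin R}
    (hWH2 : WH2 r = Pi.single r 1) :
    hid2 f WI1 WH1 h01 WI2 WH2 h02 x t r
      = h02 r * ∏ s ∈ Finset.range t, ∑ α,
          WI2 r α * (h01 α * ∏ j ∈ Finset.range (s + 1), ∑ m, WI1 α m * f (x j) m) := by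
  simp only [hid2_eq_mul_prod_sum_hid1 f WI1 WH1 h01 WI2 h02 x t hWH2,
    hid1_eq_mul_prod f WI1 h01 x _ (hWH1 _)]

end HiddenStates

/-- For a depth `L = 2` RAC with `W^{H,1} = W^{H,2} = I`,
`W^{I,2}_{ij} = δ_{i1}`, `W^O_{ij} = δ_{1j}`, arbitrary `W^{I,1}`, and all-ones initial
hidden states, the output of class `c` after `T` time-steps equals
`∏_{t=1}^T ∑_{r=1}^R ∏_{j=1}^t (W^{I,1} f(x^j))_r`. -/
theorem deep_rac_special_assignment_output {X : Type*} (T M R C : ℕ)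
    (hT : 0 < T) (hR : 0 < R)
    (f : X → Fin M → ℝ) (WI1 : Fin R → Fin M → ℝ)
    (WH1 WH2 WI2 : Fin R → Fin R → ℝ) (WO : Fin C → Fin R → ℝ)
    (h01 h02 : Fin R → ℝ)
    (hWH1 : ∀ β α, WH1 β α = if β = α then 1 else 0)
    (hWH2 : ∀ β α, WH2 β α = if β = α then 1 else 0)
    (hWI2 : ∀ i j : Fin R, WI2 i j = if (i : ℕ) = 0 then 1 else 0)
    (hWO : ∀ (i : Fin C) (j : Fin R), WO i j = if (j : ℕ) = 0 then 1 else 0)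
    (hh01 : ∀ α, h01 α = 1) (hh02 : ∀ α, h02 α = 1)
    (c : Fin C) (x : ℕ → X) :
    ∑ α, WO c α * hid2 f WI1 WH1 h01 WI2 WH2 h02 x T α
      = ∏ t ∈ Finset.range T, ∑ r : Fin R,
          ∏ j ∈ Finset.range (t + 1), ∑ m, WI1 r m * f (x j) m := by
  let first : Fin R := ⟨0, hR⟩
  have hWH1_row (r : Fin R) : WH1 r = Pi.single r 1 := by
    ext α
    simp only [hWH1, Pi.single_apply, eq_comm]
  have hWH2_row : WH2 first = Pi.single first 1 := by
    ext α
    simp only [hWH2, Pi.single_apply, eq_comm]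
  have hWO_row : WO c = Pi.single first 1 := by
    ext α
    simp only [hWO, Pi.single_apply, first, Fin.ext_iff]
  have hWI2_row (r : Fin R) : WI2 first r = 1 := by rw [hWI2, if_pos rfl]
  rw [sum_mul_of_eq_single_one hWO_row,
    hid2_eq_mul_prod_sum_prod f WI1 h01 WI2 h02 x T hWH1_row hWH2_row]
  simp only [hWI2_row, hh01, hh02, one_mul]
end

section
/- Let T be an even positive integer, let R̄, M be positive integers with R̄ ≤ M, let z ∈ ℝ \ {0}, Ω a positive integer, and let Z ∈ ℝ^{R̄×M} have entries Z_{rd} = z^{Ω^r} if r = d and Z_{rd} = 1 if r ≠ d, d ≤ M (i.e. Z_{rd} = z^{Ω^r δ_{rd}}). Define the order-T tensor B̃ by B̃_{d_1,...,d_T} = ∏_{t=T/2+1}^{T} ∑_{r=1}^{R̄} ∏_{j=1}^{t} Z_{r d_j}, for d_1,...,d_T ∈ [M], and let B = [B̃]_{S,E} be its M^{T/2} × M^{T/2} Start-End matricization. Then there exist a positive integer Ω and a value z ∈ ℝ such that rank(B) = multiset(R̄, T/2) = binom(R̄ + T/2 − 1, T/2). -/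
/-- Concatenate two half index tuples of length `T/2` into a 1-indexed sequence of indices:
`j ∈ {1,…,T/2}` reads the row tuple and `j ∈ {T/2+1,…,T}` reads the column tuple. -/
def join1 {M T : ℕ} (hT2 : 0 < T / 2) (u v : Fin (T / 2) → Fin M) : ℕ → Fin M :=
  fun j =>
    if h : j - 1 < T / 2 then u ⟨j - 1, h⟩
    else v ⟨(j - 1 - T / 2) % (T / 2), Nat.mod_lt _ hT2⟩

/-!
Expanding the product of the sums over `r` gives a sum over words `ρ : Fin N → ι`, in which the row
word meets only the multiset of letters of `ρ`. Grouping the words by this multiset factors the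
matricization through `Sym ι N`, whose cardinality bounds the rank from above for every `Z`.

For the lower bound, put `z = X` and restrict rows and columns to the nondecreasing words, one for
each multiset. Both square factors then have a monic determinant, so the minor vanishes for only
finitely many `z`:

* the entries of the row factor are `X ^ ⟪p, q⟫` for a weighted inner product of multiplicity
  vectors, and `2 ⟪p, q⟫ < ⟪p, p⟫ + ⟪q, q⟫` makes the identity the only permutation of top degree;
* in the column factor, the exponent of a word `ρ` against a nondecreasing word `v` is largest only
  for `ρ = v`, as soon as each weight exceeds `N` times every smaller one, so each diagonal entry
  dominates its column.
-/

namespace DeepRac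

open Filter Finset Polynomial

/-! ### Dominant diagonals -/

section Polynomial

variable {R κ : Type*}

theorem degree_sum_erase_lt [Semiring R] [DecidableEq κ] {s : Finset κ} {f : κ → R[X]} {a : κ}
    (h0 : f a ≠ 0) (hlt : ∀ b ∈ s, b ≠ a → (f b).degree < (f a).degree) :
    (∑ b ∈ s.erase a, f b).degree < (f a).degree := by
  refine (degree_sum_le _ _).trans_lt
    ((Finset.sup_lt_iff (bot_lt_iff_ne_bot.2 (degree_ne_bot.2 h0))).2 fun b hb => ?_)
  exact hlt b (mem_of_mem_erase hb) (ne_of_mem_erase hb)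

theorem monic_sum_of_degree_lt [Semiring R] {s : Finset κ} {f : κ → R[X]} {a : κ}
    (ha : a ∈ s) (hmonic : (f a).Monic) (hlt : ∀ b ∈ s, b ≠ a → (f b).degree < (f a).degree) :
    (∑ b ∈ s, f b).Monic := by
  classical
  nontriviality R
  rw [← add_sum_erase s f ha]
  exact hmonic.add_of_left (degree_sum_erase_lt hmonic.ne_zero hlt)

section SumXPow

variable [Semiring R] {s : Finset κ} {f : κ → ℕ}

theorem monic_sum_X_pow {a : κ} (ha : a ∈ s) (hlt : ∀ b ∈ s, b ≠ a → f b < f a) :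
    (∑ b ∈ s, (X : R[X]) ^ f b).Monic := by
  nontriviality R
  refine monic_sum_of_degree_lt ha (monic_X_pow _) fun b hb hba => ?_
  simpa only [degree_X_pow, Nat.cast_lt] using hlt b hb hba

theorem natDegree_sum_X_pow [Nontrivial R] {a : κ} (ha : a ∈ s)
    (hlt : ∀ b ∈ s, b ≠ a → f b < f a) :
    (∑ b ∈ s, (X : R[X]) ^ f b).natDegree = f a := by
  classical
  have hrest := degree_sum_erase_lt (R := R) (s := s) (f := fun b => X ^ f b)
    (monic_X_pow (f a)).ne_zero fun b hb hba => by
      simpa only [degree_X_pow, Nat.cast_lt] using hlt b hb hba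
  rw [← add_sum_erase s _ ha, natDegree_eq_of_degree_eq (degree_add_eq_left_of_degree_lt hrest),
    natDegree_X_pow]

theorem natDegree_sum_X_pow_lt {n : ℕ} (hn : 0 < n) (hlt : ∀ b ∈ s, f b < n) :
    (∑ b ∈ s, (X : R[X]) ^ f b).natDegree < n :=
  (natDegree_sum_le _ _).trans_lt <| (fold_max_lt n).2
    ⟨hn, fun b hb => (natDegree_X_pow_le _).trans_lt (hlt b hb)⟩

end SumXPow

theorem monic_det_of_sum_natDegree_lt [CommRing R] [Fintype κ] [DecidableEq κ]
    {A : Matrix κ κ R[X]} (hmonic : ∀ i, (A i i).Monic)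
    (hlt : ∀ σ : Equiv.Perm κ, σ ≠ 1 →
      ∑ i, (A (σ i) i).natDegree < ∑ i, (A i i).natDegree) :
    A.det.Monic := by
  nontriviality R
  have hdiag : (∏ i, A i i).Monic := monic_prod_of_monic _ _ fun i _ => hmonic i
  rw [Matrix.det_apply]
  refine monic_sum_of_degree_lt (mem_univ 1) (by simpa using hdiag) fun σ _ hσ => ?_
  calc (Equiv.Perm.sign σ • ∏ i, A (σ i) i).degree
      ≤ (∏ i, A (σ i) i).degree := degree_smul_le _ _
    _ ≤ ((∑ i, (A (σ i) i).natDegree : ℕ) : WithBot ℕ) :=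
        degree_le_of_natDegree_le (natDegree_prod_le _ _)
    _ < ((∑ i, (A i i).natDegree : ℕ) : WithBot ℕ) := Nat.cast_lt.2 (hlt σ hσ)
    _ = (∏ i, A i i).degree := by
        rw [degree_eq_natDegree hdiag.ne_zero, natDegree_prod_of_monic _ _ fun i _ => hmonic i]
    _ = (Equiv.Perm.sign 1 • ∏ i, A ((1 : Equiv.Perm κ) i) i).degree := by simp

theorem monic_det_of_natDegree_lt [CommRing R] [Fintype κ] [DecidableEq κ] {A : Matrix κ κ R[X]}
    (hmonic : ∀ i, (A i i).Monic)
    (hlt : ∀ i j, i ≠ j → (A i j).natDegree < (A j j).natDegree) :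
    A.det.Monic := by
  refine monic_det_of_sum_natDegree_lt hmonic fun σ hσ => ?_
  obtain ⟨j, hj⟩ : ∃ j, σ j ≠ j := not_forall.1 fun h => hσ (Equiv.ext h)
  refine sum_lt_sum (fun i _ => ?_) ⟨j, mem_univ j, hlt _ _ hj⟩
  rcases eq_or_ne (σ i) i with hi | hi
  · rw [hi]
  · exact (hlt _ _ hi).le

end Polynomial

theorem sum_apply_perm_lt_sum_diag {κ G : Type*} [Fintype κ] [AddCommMonoid G] [LinearOrder G]
    [IsOrderedCancelAddMonoid G] {B : κ → κ → G}
    (hB : ∀ p q, p ≠ q → 2 • B p q < B p p + B q q) {σ : Equiv.Perm κ} (hσ : σ ≠ 1) :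
    ∑ q, B (σ q) q < ∑ q, B q q := by
  obtain ⟨q₀, hq₀⟩ : ∃ q, σ q ≠ q := not_forall.1 fun h => hσ (Equiv.ext h)
  have hle (p q : κ) : 2 • B p q ≤ B p p + B q q := by
    rcases eq_or_ne p q with rfl | hpq
    · exact (two_nsmul _).le
    · exact (hB p q hpq).le
  have hlt : ∑ q, 2 • B (σ q) q < ∑ q, (B (σ q) (σ q) + B q q) :=
    sum_lt_sum (fun q _ => hle _ _) ⟨q₀, mem_univ _, hB _ _ hq₀⟩
  rw [sum_nsmul, sum_add_distrib, Equiv.sum_comp σ fun q => B q q, ← two_nsmul] at hlt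
  exact lt_of_nsmul_lt_nsmul_right 2 hlt

theorem card_le_rank_of_isUnit_det_submatrix {R l m n : Type*} [CommRing R] [Nontrivial R]
    [Fintype l] [DecidableEq l] [Fintype n] (A : Matrix m n R) (r : l → m) (c : l → n)
    (h : IsUnit (A.submatrix r c).det) : Fintype.card l ≤ A.rank := by
  rw [← Matrix.rank_of_isUnit _ ((Matrix.isUnit_iff_isUnit_det _).2 h)]
  exact A.rank_submatrix_le r c

/-! ### Words and their multisets of letters -/

/-- The multiset of letters of the word `ρ`. -/
def letters {ι : Type*} {N : ℕ} (ρ : Fin N → ι) : Sym ι N :=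
  ⟨univ.val.map ρ, by simp⟩

theorem coe_letters {ι : Type*} {N : ℕ} (ρ : Fin N → ι) :
    (letters ρ : Multiset ι) = univ.val.map ρ :=
  rfl

theorem count_letters {ι : Type*} [DecidableEq ι] {N : ℕ} (ρ : Fin N → ι) (r : ι) :
    (letters ρ : Multiset ι).count r = #{i | ρ i = r} := by
  simp only [coe_letters, Multiset.count_map, eq_comm]
  rfl

theorem exists_monotone_letters_eq {ι : Type*} [LinearOrder ι] {N : ℕ} (q : Sym ι N) :
    ∃ ρ : Fin N → ι, Monotone ρ ∧ letters ρ = q := by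
  obtain ⟨s, rfl⟩ := q
  obtain ⟨l, hl, rfl⟩ : ∃ l : List ι, l.SortedLE ∧ (l : Multiset ι) = s :=
    ⟨s.sort, (s.pairwise_sort (· ≤ ·)).sortedLE, s.sort_eq (· ≤ ·)⟩
  refine ⟨l.get, hl.monotone_get, Subtype.ext ?_⟩
  exact (Fin.univ_val_map l.get).trans (congrArg _ (List.ofFn_get l))

/-! ### Factorization through multisets -/

section Factorization

variable {ι α S : Type*} [Fintype ι] (N : ℕ)

/-- The Start-End matricization `B` of the order-`2N` tensor built from `Z`. The factor
`∏ j ∈ {1, …, N + 1 + k}, Z r (d j)` is split into the row word `u`, which is read in full, and the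
column word `v`, which is read up to position `k`. -/
def startEnd [CommSemiring S] (Z : Matrix ι α S) : Matrix (Fin N → α) (Fin N → α) S :=
  .of fun u v => ∏ k, ∑ r, (∏ i, Z r (u i)) * ∏ i ∈ Iic k, Z r (v i)

theorem startEnd_map {S' : Type*} [CommSemiring S] [CommSemiring S'] (f : S →+* S')
    (Z : Matrix ι α S) : startEnd N (Z.map f) = (startEnd N Z).map f := by
  ext u v
  simp [startEnd]

/-- The left factor of `startEnd N Z = rowFactor N Z * colFactor N Z`: the product of the entries of
`Z` over all pairs of a letter of the multiset `p` and a letter of the row word `u`. -/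
def rowFactor [CommSemiring S] (Z : Matrix ι α S) : Matrix (Fin N → α) (Sym ι N) S :=
  .of fun u p => ((p : Multiset ι).map fun r => ∏ i, Z r (u i)).prod

/-- The right factor of `startEnd N Z = rowFactor N Z * colFactor N Z`: the words `ρ` with
multiset of letters `p` are summed with the weight they receive from the column word `v`. -/
def colFactor [CommSemiring S] [DecidableEq ι] (Z : Matrix ι α S) :
    Matrix (Sym ι N) (Fin N → α) S :=
  .of fun p v => ∑ ρ with letters ρ = p, ∏ k, ∏ i ∈ Iic k, Z (ρ k) (v i)

theorem startEnd_eq_mul [CommSemiring S] [DecidableEq ι] (Z : Matrix ι α S) :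
    startEnd N Z = rowFactor N Z * colFactor N Z := by
  ext u v
  let g (ρ : Fin N → ι) : S := ∏ k, ∏ i ∈ Iic k, Z (ρ k) (v i)
  calc startEnd N Z u v = ∑ ρ : Fin N → ι, (∏ k, ∏ i, Z (ρ k) (u i)) * g ρ := by
        simp only [startEnd, Matrix.of_apply, Fintype.prod_sum, prod_mul_distrib, g]
    _ = ∑ ρ : Fin N → ι, rowFactor N Z u (letters ρ) * g ρ := by
        simp only [rowFactor, Matrix.of_apply, coe_letters, Multiset.map_map]
        rfl
    _ = ∑ p, ∑ ρ with letters ρ = p, rowFactor N Z u (letters ρ) * g ρ :=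
        (sum_fiberwise _ _ _).symm
    _ = (rowFactor N Z * colFactor N Z) u v := by
        simp only [Matrix.mul_apply, colFactor, Matrix.of_apply, mul_sum, g]
        refine sum_congr rfl fun p _ => sum_congr rfl fun ρ hρ => ?_
        rw [(mem_filter.1 hρ).2]

theorem rank_startEnd_le [CommSemiring S] [StrongRankCondition S] [Fintype α]
    (Z : Matrix ι α S) :
    (startEnd N Z).rank ≤ (Fintype.card ι).multichoose N := by
  classical
  rw [startEnd_eq_mul, ← Sym.card_sym_eq_multichoose]
  exact (Matrix.rank_mul_le_left _ _).trans (Matrix.rank_le_card_width _)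

end Factorization

/-! ### Exponents -/

section Exponents

variable {ι : Type*} {N : ℕ} (w : ι → ℕ)

/-- The `w`-weighted inner product of the multiplicity vectors of two multisets. -/
def pairing [Fintype ι] [DecidableEq ι] (p q : Sym ι N) : ℕ :=
  ∑ r, w r * (p : Multiset ι).count r * (q : Multiset ι).count r

/-- The `w`-weighted number of pairs `i ≤ k` of positions with `v i = ρ k`. -/
def matchWeight [DecidableEq ι] (v ρ : Fin N → ι) : ℕ :=
  ∑ k, w (ρ k) * #{i ∈ Iic k | v i = ρ k}

variable {w}

theorem two_mul_pairing_lt [Fintype ι] [DecidableEq ι] (hw : ∀ r, 0 < w r) {p q : Sym ι N}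
    (hpq : p ≠ q) : 2 * pairing w p q < pairing w p p + pairing w q q := by
  let d (r : ι) : ℤ := (p : Multiset ι).count r - (q : Multiset ι).count r
  obtain ⟨r₀, hr₀⟩ : ∃ r, d r ≠ 0 := by
    by_contra! h
    exact hpq (Sym.coe_injective (Multiset.ext.2 fun r => by
      simpa [d, sub_eq_zero] using h r))
  have hpos : 0 < ∑ r, (w r : ℤ) * d r ^ 2 :=
    sum_pos' (fun r _ => by positivity)
      ⟨r₀, mem_univ _, mul_pos (mod_cast hw r₀) (by positivity)⟩
  have hsub : ∑ r, (w r : ℤ) * d r ^ 2 =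
      pairing w p p + pairing w q q - 2 * pairing w p q := by
    simp only [pairing, Nat.cast_sum, Nat.cast_mul, mul_sum, ← sum_add_distrib, ← sum_sub_distrib]
    exact sum_congr rfl fun r _ => by ring
  lia

variable [LinearOrder ι]

theorem weight_mul_card_lt (hw : ∀ r, 0 < w r) (hgrowth : ∀ s r, s < r → w s * N < w r)
    {v : Fin N → ι} (hv : Monotone v) (k : Fin N) {s : ι} (hs : s ≠ v k) :
    w s * #{i ∈ Iic k | v i = s} < w (v k) * #{i ∈ Iic k | v i = v k} := by
  have hself : 0 < #{i ∈ Iic k | v i = v k} := card_pos.2 ⟨k, by simp⟩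
  -- Letters below `v k` are too light, and letters above it do not occur up to position `k`.
  rcases hs.lt_or_gt with hlt | hgt
  · calc w s * #{i ∈ Iic k | v i = s} ≤ w s * N := by
          gcongr
          exact (card_le_univ _).trans_eq (Fintype.card_fin N)
      _ < w (v k) := hgrowth s _ hlt
      _ ≤ w (v k) * #{i ∈ Iic k | v i = v k} := Nat.le_mul_of_pos_right _ hself
  · have hnone : #{i ∈ Iic k | v i = s} = 0 := by
      refine card_eq_zero.2 (filter_eq_empty_iff.2 fun i hi his => ?_)
      exact ((hv (mem_Iic.1 hi)).trans_lt hgt).ne his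
    rw [hnone, mul_zero]
    exact Nat.mul_pos (hw _) hself

theorem matchWeight_lt_self (hw : ∀ r, 0 < w r) (hgrowth : ∀ s r, s < r → w s * N < w r)
    {v ρ : Fin N → ι} (hv : Monotone v) (hρ : ρ ≠ v) :
    matchWeight w v ρ < matchWeight w v v := by
  obtain ⟨k, hk⟩ := Function.ne_iff.1 hρ
  refine sum_lt_sum (fun i _ => ?_) ⟨k, mem_univ k, weight_mul_card_lt hw hgrowth hv k hk⟩
  rcases eq_or_ne (ρ i) (v i) with hi | hi
  · rw [hi]
  · exact (weight_mul_card_lt hw hgrowth hv i hi).le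

end Exponents

/-! ### The rank for a grid matrix -/

section Grid

variable {ι α : Type*} [DecidableEq α] {N : ℕ} (e : ι ↪ α) (w : ι → ℕ)

/-- The matrix `Z` with entries `z ^ (w r * δ_{rd})`, where the row label `r` is identified with the
column label `e r`. -/
def gridMatrix {S : Type*} [Monoid S] (z : S) : Matrix ι α S :=
  .of fun r d => if e r = d then z ^ w r else 1

theorem gridMatrix_map {S S' : Type*} [Semiring S] [Semiring S'] (f : S →+* S') (z : S) :
    (gridMatrix e w z).map f = gridMatrix e w (f z) := by
  ext r d
  simp [gridMatrix, apply_ite f]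

theorem prod_gridMatrix_apply {S κ : Type*} [CommMonoid S] [DecidableEq ι] (z : S)
    (s : Finset κ) (v : κ → ι) (r : ι) :
    ∏ i ∈ s, gridMatrix e w z r (e (v i)) = z ^ (w r * #{i ∈ s | v i = r}) := by
  simp only [gridMatrix, Matrix.of_apply, e.apply_eq_iff_eq, eq_comm (a := r), prod_ite,
    prod_const, one_pow, mul_one, pow_mul]

theorem rowFactor_gridMatrix {S : Type*} [CommSemiring S] [Fintype ι] [DecidableEq ι] (z : S)
    (ρ : Fin N → ι) (p : Sym ι N) :
    rowFactor N (gridMatrix e w z) (e ∘ ρ) p = z ^ pairing w (letters ρ) p := by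
  simp only [rowFactor, Matrix.of_apply, Function.comp_apply, prod_gridMatrix_apply,
    ← count_letters, prod_multiset_map_count, pairing, ← prod_pow_eq_pow_sum, pow_mul]
  refine prod_subset (subset_univ _) fun r _ hr => ?_
  rw [Multiset.count_eq_zero.2 fun hmem => hr (Multiset.mem_toFinset.2 hmem), pow_zero]

theorem colFactor_gridMatrix {S : Type*} [CommSemiring S] [Fintype ι] [DecidableEq ι] (z : S)
    (v : Fin N → ι) (p : Sym ι N) :
    colFactor N (gridMatrix e w z) p (e ∘ v) =
      ∑ ρ with letters ρ = p, z ^ matchWeight w v ρ := by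
  simp only [colFactor, Matrix.of_apply, Function.comp_apply, prod_gridMatrix_apply, matchWeight,
    prod_pow_eq_pow_sum]

variable {w} [Fintype ι]

theorem monic_det_rowFactor_submatrix {R : Type*} [CommRing R] [DecidableEq ι]
    (hw : ∀ r, 0 < w r) {v : Sym ι N → Fin N → ι} (hv : ∀ q, letters (v q) = q) :
    ((rowFactor N (gridMatrix e w (X : R[X]))).submatrix (fun q => e ∘ v q) id).det.Monic := by
  nontriviality R
  refine monic_det_of_sum_natDegree_lt (fun q => ?_) fun σ hσ => ?_ <;>
    simp only [Matrix.submatrix_apply, id, rowFactor_gridMatrix, hv, natDegree_X_pow]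
  · exact monic_X_pow _
  · exact sum_apply_perm_lt_sum_diag (fun p q => two_mul_pairing_lt hw) hσ

theorem monic_det_colFactor_submatrix {R : Type*} [CommRing R] [LinearOrder ι]
    (hw : ∀ r, 0 < w r) (hgrowth : ∀ s r, s < r → w s * N < w r)
    {v : Sym ι N → Fin N → ι} (hv : ∀ q, letters (v q) = q) (hmono : ∀ q, Monotone (v q)) :
    ((colFactor N (gridMatrix e w (X : R[X]))).submatrix id (fun q => e ∘ v q)).det.Monic := by
  nontriviality R
  have hmax (q : Sym ι N) (ρ : Fin N → ι) (hρ : ρ ≠ v q) :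
      matchWeight w (v q) ρ < matchWeight w (v q) (v q) :=
    matchWeight_lt_self hw hgrowth (hmono q) hρ
  have hmem (q : Sym ι N) : v q ∈ ({ρ | letters ρ = q} : Finset (Fin N → ι)) := by simp [hv]
  have hne {p q : Sym ι N} (hpq : p ≠ q) {ρ : Fin N → ι} (hρ : letters ρ = p) : ρ ≠ v q := by
    rintro rfl
    exact hpq (hρ.symm.trans (hv q))
  refine monic_det_of_natDegree_lt (fun q => ?_) fun p q hpq => ?_ <;>
    simp only [Matrix.submatrix_apply, id, colFactor_gridMatrix]
  · exact monic_sum_X_pow (hmem q) fun ρ _ => hmax q ρ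
  · rw [natDegree_sum_X_pow (hmem q) fun ρ _ => hmax q ρ]
    exact natDegree_sum_X_pow_lt (hmax q _ (hne hpq (hv p))).pos fun ρ hρ =>
      hmax q ρ (hne hpq (mem_filter.1 hρ).2)

theorem monic_det_startEnd_submatrix {R : Type*} [CommRing R] [LinearOrder ι]
    (hw : ∀ r, 0 < w r) (hgrowth : ∀ s r, s < r → w s * N < w r)
    {v : Sym ι N → Fin N → ι} (hv : ∀ q, letters (v q) = q) (hmono : ∀ q, Monotone (v q)) :
    ((startEnd N (gridMatrix e w (X : R[X]))).submatrix
      (fun q => e ∘ v q) (fun q => e ∘ v q)).det.Monic := by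
  rw [startEnd_eq_mul, Matrix.submatrix_mul _ _ _ id _ Function.bijective_id, Matrix.det_mul]
  exact (monic_det_rowFactor_submatrix e hw hv).mul
    (monic_det_colFactor_submatrix e hw hgrowth hv hmono)

theorem eventually_rank_startEnd_gridMatrix (K : Type*) [Field K] [LinearOrder ι] [Fintype α]
    (hw : ∀ r, 0 < w r) (hgrowth : ∀ s r, s < r → w s * N < w r) :
    ∀ᶠ z : K in cofinite,
      (startEnd N (gridMatrix e w z)).rank = (Fintype.card ι).multichoose N := by
  choose v hmono hv using exists_monotone_letters_eq (ι := ι) (N := N)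
  have hmonic := monic_det_startEnd_submatrix (R := K) e hw hgrowth hv hmono
  filter_upwards [(finite_setOfPred_isRoot hmonic.ne_zero).compl_mem_cofinite] with z hz
  refine (rank_startEnd_le N _).antisymm ?_
  rw [← Sym.card_sym_eq_multichoose]
  refine card_le_rank_of_isUnit_det_submatrix _ (fun q => e ∘ v q) (fun q => e ∘ v q) ?_
  have hgrid : gridMatrix e w z = (gridMatrix e w (X : K[X])).map (evalRingHom z) := by
    rw [gridMatrix_map, coe_evalRingHom, eval_X]
  rw [hgrid, startEnd_map, Matrix.submatrix_map, ← RingHom.mapMatrix_apply, ← RingHom.map_det]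
  exact isUnit_iff_ne_zero.2 hz

end Grid

/-! ### Concatenated index tuples -/

section Join

variable {M T : ℕ} (hT : 0 < T / 2) (u v : Fin (T / 2) → Fin M)

theorem join1_one_add (i : Fin (T / 2)) : join1 hT u v (1 + i) = u i := by
  simp [join1]

theorem join1_one_add_half_add (i : Fin (T / 2)) : join1 hT u v (1 + (T / 2 + i)) = v i := by
  simp [join1, Nat.mod_eq_of_lt]

theorem prod_Icc_join1 {S : Type*} [CommMonoid S] (f : Fin M → S) (k : Fin (T / 2)) :
    ∏ j ∈ Icc 1 (T / 2 + 1 + k), f (join1 hT u v j) =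
      (∏ i, f (u i)) * ∏ i ∈ Iic k, f (v i) := by
  have hlen : T / 2 + 1 + (k : ℕ) + 1 - 1 = T / 2 + (k + 1) := by lia
  rw [← Ico_add_one_right_eq_Icc, prod_Ico_eq_prod_range, hlen, prod_range_add, prod_range]
  congr 1
  · simp only [join1_one_add]
  · rw [Nat.range_succ_eq_Iic, ← Fin.map_valEmbedding_Iic, prod_map]
    simp only [Fin.valEmbedding_apply, join1_one_add_half_add]

theorem prod_sum_prod_join1 {ι S : Type*} [CommSemiring S] [Fintype ι] (hTeven : Even T)
    (Z : Matrix ι (Fin M) S) :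
    ∏ t ∈ Icc (T / 2 + 1) T, ∑ r, ∏ j ∈ Icc 1 t, Z r (join1 hT u v j) =
      startEnd (T / 2) Z u v := by
  have hlen : T + 1 - (T / 2 + 1) = T / 2 := by grind
  rw [← Ico_add_one_right_eq_Icc, prod_Ico_eq_prod_range, hlen, prod_range]
  simp only [prod_Icc_join1, startEnd, Matrix.of_apply]

end Join

end DeepRac

open DeepRac Filter in
theorem deep_rac_grid_matricization_rank_general (K : Type*) [Field K] {T Rb M Ω : ℕ}
    (hT : 0 < T / 2) (hTeven : Even T) (hRM : Rb ≤ M) (hΩ : T / 2 < Ω) :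
    ∀ᶠ z : K in cofinite,
      (Matrix.of fun row col : Fin (T / 2) → Fin M =>
          ∏ t ∈ Finset.Icc (T / 2 + 1) T, ∑ r : Fin Rb,
            ∏ j ∈ Finset.Icc 1 t,
              (if (r : ℕ) = (join1 hT row col j : ℕ)
                then z ^ (Ω ^ ((r : ℕ) + 1)) else 1)).rank
        = Nat.multichoose Rb (T / 2) := by
  let w (r : Fin Rb) : ℕ := Ω ^ ((r : ℕ) + 1)
  have hΩ0 : 0 < Ω := hT.trans hΩ
  have hw (r : Fin Rb) : 0 < w r := by positivity
  have hgrowth (s r : Fin Rb) (hsr : s < r) : w s * (T / 2) < w r :=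
    calc w s * (T / 2) < w s * Ω := Nat.mul_lt_mul_of_pos_left hΩ (hw s)
      _ = Ω ^ ((s : ℕ) + 1 + 1) := (pow_succ _ _).symm
      _ ≤ w r := Nat.pow_le_pow_right hΩ0 (Nat.succ_le_succ hsr)
  filter_upwards [eventually_rank_startEnd_gridMatrix (Fin.castLEEmb hRM) K hw hgrowth]
    with z hrank
  rw [Fintype.card_fin] at hrank
  rw [← hrank]
  congr 1
  ext row col
  rw [← prod_sum_prod_join1 hT _ _ hTeven]
  simp [gridMatrix, Fin.ext_iff, w]

/-- Let `T` be even, `R̄ ≤ M`, and `Z ∈ ℝ^{R̄×M}` have entries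
`Z_{rd} = z^{Ω^r δ_{rd}}` for some `z ≠ 0` and positive integer `Ω`.  Let `B` be the
Start–End matricization of the order-`T` tensor
`B̃_{d_1,…,d_T} = ∏_{t=T/2+1}^T ∑_{r=1}^{R̄} ∏_{j=1}^t Z_{r d_j}`.  Then there exist a
positive integer `Ω` and a value `z ∈ ℝ \ {0}` such that
`rank B = multiset(R̄, T/2) = binom(R̄ + T/2 − 1, T/2)`. -/
theorem deep_rac_grid_matricization_rank (T Rb M : ℕ) (hT : 0 < T) (hTeven : Even T)
    (hRb : 0 < Rb) (hM : 0 < M) (hRM : Rb ≤ M) :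
    ∃ Ω : ℕ, 0 < Ω ∧ ∃ z : ℝ, z ≠ 0 ∧
      (Matrix.of fun row col : Fin (T / 2) → Fin M =>
          ∏ t ∈ Finset.Icc (T / 2 + 1) T, ∑ r : Fin Rb,
            ∏ j ∈ Finset.Icc 1 t,
              (if (r : ℕ) = ((join1 (M := M) (T := T)
                    (by obtain ⟨n, hn⟩ := hTeven; omega) row col) j : ℕ)
                then z ^ (Ω ^ ((r : ℕ) + 1)) else 1)).rank
        = Nat.choose (Rb + T / 2 - 1) (T / 2) := by
  have hT2 : 0 < T / 2 := Nat.div_pos (Nat.le_of_dvd hT hTeven.two_dvd) two_pos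
  obtain ⟨z, hrank, hz⟩ := ((deep_rac_grid_matricization_rank_general ℝ hT2 hTeven hRM
    (Nat.lt_succ_self _)).and (Filter.eventually_cofinite_ne 0)).exists
  exact ⟨T / 2 + 1, Nat.succ_pos _, z, hz, hrank.trans (Nat.multichoose_eq _ _)⟩
end
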